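/- arXiv:2507.04653 — 2 statements merged into one kernel-verified Lean document; each statement's English description precedes it below -/
import Mathlib

section
/- For all positive integers α, m, n, r, the polynomial ∑_{k=1}^{n} (-1)^k·k^r·(k+1)^r·(2k+1)·w_k^{(α)}(x)^m in ℤ[x] has all its coefficients divisible by n(n+1)(n+2)/gcd(2,n). -/
open Polynomial

/-- `w(k,j) = C(k-1,j-1)·C(k+j,j) − C(k,j)·C(k+j,j-1)`. -/
def w (k j : ℕ) : ℤ :=
  ((k - 1).choose (j - 1) * (k + j).choose j : ℤ) - (k.choose j * (k + j).choose (j - 1) : ℤ)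

/-- `w_k^{(α)}(x) = ∑_{j=1}^{k} w(k,j)^α x^{j-1}` in `ℤ[x]`. -/
noncomputable def wPoly (α k : ℕ) : Polynomial ℤ :=
  ∑ j ∈ Finset.Icc 1 k, Polynomial.C ((w k j) ^ α) * X ^ (j - 1)

theorem succ_mul_choose_succ_int (n k : ℕ) :
    ((k : ℤ) + 1) * (n.choose (k + 1) : ℤ) = ((n : ℤ) - k) * (n.choose k : ℤ) := by
  rcases le_total k n with h | h
  · have := Nat.choose_succ_right_eq n k
    zify [h] at this
    linarith
  · rcases h.eq_or_lt with rfl | h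
    · simp
    · simp [Nat.choose_eq_zero_of_lt h, Nat.choose_eq_zero_of_lt (Nat.lt_succ_of_lt h)]

theorem succ_mul_choose_int (n k : ℕ) :
    ((n : ℤ) + 1) * (n.choose k : ℤ) = ((k : ℤ) + 1) * ((n + 1).choose (k + 1) : ℤ) := by
  have := Nat.add_one_mul_choose_eq n k
  zify at this
  linarith

theorem succ_mul_choose_int' (n k : ℕ) :
    ((n : ℤ) + 1) * (n.choose k : ℤ) = ((n : ℤ) + 1 - k) * ((n + 1).choose k : ℤ) := by
  have h := succ_mul_choose_succ_int (n + 1) k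
  rw [succ_mul_choose_int, h]
  push_cast
  ring

theorem mul_w_succ_succ (p q : ℕ) :
    ((p : ℤ) + 1) * (p + 2) * w (p + 1) (q + 1) =
      (q + 1) * ((p + 1).choose (q + 1) * (p + q + 2).choose (q + 1) : ℤ) := by
  have h1 := succ_mul_choose_succ_int (p + q + 2) q
  have h2 := succ_mul_choose_int p q
  have e : p + 1 + (q + 1) = p + q + 2 := by ring
  simp only [w, e, Nat.add_sub_cancel]
  push_cast at *
  linear_combination ((p : ℤ) + 2) * ((p + q + 2).choose (q + 1) : ℤ) * h2
    + ((p : ℤ) + 1) * ((p + 1).choose (q + 1) : ℤ) * h1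

theorem mul_w_eq_add (p q : ℕ) :
    ((p : ℤ) + 1) * (p + 2) * w (p + 1) (q + 1) =
      (q + 1) * (q + 2) * (w (p + 1) (q + 2) + w (p + 1) (q + 1)) := by
  have h1 := succ_mul_choose_succ_int (p + 1) (q + 1)
  have h2 := succ_mul_choose_int (p + q + 2) (q + 1)
  have h3 := mul_w_succ_succ p q
  have h4 := mul_w_succ_succ p (q + 1)
  have hK : ((p : ℤ) + 1) * (p + 2) ≠ 0 := by positivity
  apply mul_left_cancel₀ hK
  rw [show p + (q + 1) + 2 = p + q + 2 + 1 by ring] at h4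
  push_cast at *
  simp only [add_assoc, Nat.reduceAdd, Int.reduceAdd] at *
  linear_combination (((p : ℤ) + 1) * (p + 2) - (q + 1) * (q + 2)) * h3
    - ((q : ℤ) + 1) * (q + 2) * h4
    - ((q : ℤ) + 1) * (q + 2) * ((p + (q + 3)).choose (q + 2) : ℤ) * h1
    + ((q : ℤ) + 1) * (p - q) * ((p + 1).choose (q + 1) : ℤ) * h2

theorem w_eq_zero_of_lt {k j : ℕ} (hk : 1 ≤ k) (h : k < j) : w k j = 0 := by
  simp [w, Nat.choose_eq_zero_of_lt h, Nat.choose_eq_zero_of_lt (show k - 1 < j - 1 by omega)]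

theorem w_succ_one (k : ℕ) : w (k + 1) 1 = 1 := by
  simp [w]

/-- The structure constants of the products of the functions `k ↦ w (k + 1) (a + 1)`. -/
def wStructConst (a b p : ℕ) : ℤ :=
  ((a + b + 1).choose (p + 1) : ℤ) *
      (p.choose a * (p + 1).choose (b + 1) + (p + 1).choose (a + 1) * p.choose b)
    - (a + b + 2).choose (p + 2) * (p + 1).choose (a + 1) * (p + 1).choose (b + 1)

theorem succ_mul_wStructConst (a b p : ℕ) :
    ((p : ℤ) + 1) * wStructConst a b p =
      (a + b + 2).choose (p + 2) * (p + 1).choose (a + 1) * (p + 1).choose (b + 1) := by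
  have h1 := succ_mul_choose_int p a
  have h2 := succ_mul_choose_int p b
  have h3 := succ_mul_choose_int (a + b + 1) (p + 1)
  unfold wStructConst
  push_cast at *
  simp only [add_assoc, Nat.reduceAdd, Int.reduceAdd] at *
  linear_combination ((a + (b + 1)).choose (p + 1) : ℤ) *
      (((p + 1).choose (b + 1) : ℤ) * h1 + ((p + 1).choose (a + 1) : ℤ) * h2)
    + ((p + 1).choose (a + 1) : ℤ) * ((p + 1).choose (b + 1) : ℤ) * h3

theorem wStructConst_eq_zero {a b p : ℕ} (h : a + b < p) : wStructConst a b p = 0 := by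
  simp [wStructConst, Nat.choose_eq_zero_of_lt (show a + b + 1 < p + 1 by omega),
    Nat.choose_eq_zero_of_lt (show a + b + 2 < p + 2 by omega)]

theorem wStructConst_zero_left (b p : ℕ) : wStructConst 0 b p = if p = b then 1 else 0 := by
  rcases lt_trichotomy p b with h | rfl | h
  · simp [wStructConst, Nat.choose_eq_zero_of_lt h, h.ne,
      Nat.choose_eq_zero_of_lt (show p + 1 < b + 1 by omega)]
  · simp [wStructConst]
  · rw [wStructConst_eq_zero (by omega), if_neg h.ne']

theorem wStructConst_succ_zero (a b : ℕ) :
    ((a : ℤ) + 1) * (a + 2) * wStructConst (a + 1) b 0 =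
      (2 - (a + 1) * (a + 2)) * wStructConst a b 0 := by
  rcases a with _ | a
  · simp [wStructConst]
  · simp [wStructConst, Nat.choose_eq_zero_of_lt (show 1 < a + 1 + 1 by omega),
      Nat.choose_eq_zero_of_lt (show 1 < a + 1 + 1 + 1 by omega)]

theorem wStructConst_succ_succ (a b p : ℕ) :
    ((a : ℤ) + 1) * (a + 2) * wStructConst (a + 1) b (p + 1) =
      (p + 1) * (p + 2) * wStructConst a b p +
        ((p + 2) * (p + 3) - (a + 1) * (a + 2)) * wStructConst a b (p + 1) := by
  have h1 := succ_mul_wStructConst a b p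
  have h2 := succ_mul_wStructConst a b (p + 1)
  have h3 := succ_mul_wStructConst (a + 1) b (p + 1)
  have k1 := succ_mul_choose_succ_int (p + 2) (a + 1)
  have k2 := succ_mul_choose_int' (p + 1) (a + 1)
  have k3 := succ_mul_choose_int' (p + 1) (b + 1)
  have k4 := succ_mul_choose_succ_int (a + b + 2) (p + 2)
  have k5 : ((a + 1 + b + 2).choose (p + 1 + 2) : ℤ) =
      (a + b + 2).choose (p + 2) + (a + b + 2).choose (p + 3) := by
    rw [show a + 1 + b + 2 = a + b + 2 + 1 by ring]
    exact_mod_cast Nat.choose_succ_succ (a + b + 2) (p + 2)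
  rw [k5] at h3
  have hp : ((p : ℤ) + 2) * (p + 2) ≠ 0 := by positivity
  apply mul_left_cancel₀ hp
  push_cast at *
  simp only [add_assoc, Nat.reduceAdd, Int.reduceAdd] at *
  generalize wStructConst a b p = c0 at *
  generalize wStructConst a b (p + 1) = c1 at *
  generalize wStructConst (a + 1) b (p + 1) = c2 at *
  generalize ((p + 2).choose (a + 2) : ℤ) = A2 at *
  generalize ((p + 2).choose (a + 1) : ℤ) = A at *
  generalize ((p + 1).choose (a + 1) : ℤ) = A0 at *
  generalize ((p + 2).choose (b + 1) : ℤ) = B at *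
  generalize ((p + 1).choose (b + 1) : ℤ) = B0 at *
  generalize ((a + (b + 2)).choose (p + 2) : ℤ) = D at *
  generalize ((a + (b + 2)).choose (p + 3) : ℤ) = E at *
  have h1' : ((p : ℤ) + 2) * (p + 2) * ((p + 1) * c0) = D * ((p + 2) * A0) * ((p + 2) * B0) := by
    rw [h1]; ring
  have e2 : ((p : ℤ) + 2) * A0 = (p + 1 - a) * A := by linear_combination k2
  have e3 : ((p : ℤ) + 2) * B0 = (p + 1 - b) * B := by linear_combination k3
  rw [e2, e3] at h1'
  linear_combination ((p : ℤ) + 2) * (a + 1) * (a + 2) * h3 - ((p : ℤ) + 2) * h1'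
    - ((p : ℤ) + 2) * ((p + 2) * (p + 3) - (a + 1) * (a + 2)) * h2
    + ((p : ℤ) + 2) * (a + 1) * (D + E) * B * k1
    - ((p : ℤ) + 2) * (p + 1 - a) * A * B * k4

theorem w_mul_w (k a b : ℕ) :
    w (k + 1) (a + 1) * w (k + 1) (b + 1) =
      ∑ p ∈ Finset.range (a + b + 1), wStructConst a b p * w (k + 1) (p + 1) := by
  induction a with
  | zero =>
    simp [wStructConst_zero_left, w_succ_one]
  | succ a ih =>
    have ha : ((a : ℤ) + 1) * (a + 2) ≠ 0 := by positivity
    apply mul_left_cancel₀ ha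
    have h1 := mul_w_eq_add k a
    have key : ((a : ℤ) + 1) * (a + 2) * (w (k + 1) (a + 1 + 1) * w (k + 1) (b + 1)) =
        (((k : ℤ) + 1) * (k + 2) - (a + 1) * (a + 2)) *
          (w (k + 1) (a + 1) * w (k + 1) (b + 1)) := by
      linear_combination -w (k + 1) (b + 1) * h1
    have hs : ∑ p ∈ Finset.range (a + b + 1),
          ((p + 2 : ℤ) * (p + 3) - (a + 1) * (a + 2)) * wStructConst a b (p + 1)
            * w (k + 1) (p + 2)
          + (2 - (a + 1 : ℤ) * (a + 2)) * wStructConst a b 0 * w (k + 1) 1 =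
        ∑ p ∈ Finset.range (a + b + 1),
          ((p + 1 : ℤ) * (p + 2) - (a + 1) * (a + 2)) * wStructConst a b p
            * w (k + 1) (p + 1) := by
      have hlast := Finset.sum_range_succ (fun p : ℕ =>
        ((p + 1 : ℤ) * (p + 2) - (a + 1) * (a + 2)) * wStructConst a b p
            * w (k + 1) (p + 1)) (a + b + 1)
      rw [wStructConst_eq_zero (Nat.lt_succ_self (a + b)), Finset.sum_range_succ'] at hlast
      rw [mul_zero, zero_mul, add_zero] at hlast
      rw [← hlast]
      congr 1
    rw [key, ih, show a + 1 + b + 1 = a + b + 1 + 1 by ring,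
      Finset.sum_range_succ' _ (a + b + 1),
      mul_add _ (Finset.sum _ _),
      Finset.mul_sum, Finset.mul_sum, ← mul_assoc _ (wStructConst _ _ _), zero_add,
      wStructConst_succ_zero]
    simp only [← mul_assoc _ (wStructConst _ _ _), wStructConst_succ_succ, add_mul _ _ (w _ _),
      Finset.sum_add_distrib]
    rw [add_assoc (Finset.sum _ _), hs, ← Finset.sum_add_distrib]
    refine Finset.sum_congr rfl fun p _ => ?_
    have h := mul_w_eq_add k p
    linear_combination wStructConst a b p * h

/-- The functions of `k` in the integer span of `k ↦ w (k + 1) (a + 1)`, `a ≥ 0`. -/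
def wSpan : Submodule ℤ (ℕ → ℤ) :=
  Submodule.span ℤ (Set.range fun (a k : ℕ) => w (k + 1) (a + 1))

theorem w_mem_wSpan (a : ℕ) : (fun k => w (k + 1) (a + 1)) ∈ wSpan :=
  Submodule.subset_span ⟨a, rfl⟩

/-- `wSpan` is closed under multiplication. -/
def wAlg : Subalgebra ℤ (ℕ → ℤ) :=
  wSpan.toSubalgebra
    (by
      convert w_mem_wSpan 0 using 1
      funext k
      simp [w_succ_one])
    (by
      intro x y hx hy
      have hle : wSpan * wSpan ≤ wSpan := by
        unfold wSpan
        rw [Submodule.span_mul_span, Submodule.span_le]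
        rintro _ ⟨_, ⟨a, rfl⟩, _, ⟨b, rfl⟩, rfl⟩
        have : ((fun k => w (k + 1) (a + 1)) * fun k => w (k + 1) (b + 1)) =
            ∑ p ∈ Finset.range (a + b + 1),
              wStructConst a b p • fun k => w (k + 1) (p + 1) := by
          funext k
          simp [w_mul_w]
        simp only [this]
        exact Submodule.sum_mem _ fun p _ => Submodule.smul_mem _ _ (w_mem_wSpan p)
      exact hle (Submodule.mul_mem_mul hx hy))

theorem mem_wAlg {f : ℕ → ℤ} : f ∈ wAlg ↔ f ∈ wSpan := Iff.rfl

theorem mul_succ_mem_wAlg : (fun k : ℕ => ((k : ℤ) + 1) * (k + 2)) ∈ wAlg := by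
  have : (fun k : ℕ => ((k : ℤ) + 1) * (k + 2)) =
      (2 : ℤ) • ((fun k => w (k + 1) (1 + 1)) + fun k => w (k + 1) (0 + 1)) := by
    funext k
    simpa [w_succ_one] using mul_w_eq_add k 0
  rw [this, mem_wAlg]
  exact Submodule.smul_mem _ _ (Submodule.add_mem _ (w_mem_wSpan 1) (w_mem_wSpan 0))

theorem alt_sum_w (n q : ℕ) :
    ∑ k ∈ Finset.range n, (-1 : ℤ) ^ (k + 1) * (2 * k + 3) *
        (((k : ℤ) + 1) * (k + 2) * w (k + 1) (q + 1)) =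
      (-1) ^ n * ((n + 1) * (q + 1) * (n.choose (q + 1) * (n + q + 2).choose (q + 1))) := by
  induction n with
  | zero => simp
  | succ n ih =>
    rw [Finset.sum_range_succ, ih, mul_w_succ_succ]
    have h1 := succ_mul_choose_int' n (q + 1)
    have h2 := succ_mul_choose_int' (n + q + 2) (q + 1)
    rw [show n + 1 + q + 2 = n + q + 2 + 1 by ring, pow_succ]
    push_cast at *
    linear_combination (-1 : ℤ) ^ n * (q + 1) * (((n + q + 2).choose (q + 1) : ℤ) * h1
      - ((n + 1).choose (q + 1) : ℤ) * h2)

theorem dvd_of_mul_eq_add_two_mul {n : ℕ} {a b : ℤ}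
    (h : (n : ℤ) * a = (n + 2) * b) :
    ((n * (n + 1) * (n + 2) / Nat.gcd 2 n : ℕ) : ℤ) ∣ (n + 1) * (n + 2) * b := by
  rcases Nat.even_or_odd' n with ⟨t, rfl | rfl⟩
  · have hg : Nat.gcd 2 (2 * t) = 2 := by simp
    rw [hg, show 2 * t * (2 * t + 1) * (2 * t + 2) = 2 * (t * (2 * t + 1) * (2 * t + 2)) by ring,
      Nat.mul_div_cancel_left _ two_pos]
    push_cast at *
    have hb : (t : ℤ) ∣ b := ⟨a - b, by linarith⟩
    obtain ⟨c, rfl⟩ := hb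
    exact ⟨c, by ring⟩
  · have hg : Nat.gcd 2 (2 * t + 1) = 1 := by simp
    rw [hg, Nat.div_one]
    push_cast at *
    have hb : (2 * t + 1 : ℤ) ∣ b := ⟨b - t * (a - b), by linear_combination (t : ℤ) * h⟩
    obtain ⟨c, rfl⟩ := hb
    exact ⟨c, by ring⟩

theorem dvd_alt_sum_w {n : ℕ} (hn : 1 ≤ n) (q : ℕ) :
    ((n * (n + 1) * (n + 2) / Nat.gcd 2 n : ℕ) : ℤ) ∣
      ∑ k ∈ Finset.range n, (-1 : ℤ) ^ (k + 1) * (2 * k + 3) *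
        (((k : ℤ) + 1) * (k + 2) * w (k + 1) (q + 1)) := by
  rw [alt_sum_w]
  apply Dvd.dvd.mul_left
  obtain ⟨n, rfl⟩ := Nat.exists_eq_add_of_le' hn
  have h1 := succ_mul_choose_succ_int (n + 1 + q + 2) q
  have h2 := succ_mul_choose_int n q
  have := dvd_of_mul_eq_add_two_mul (n := n + 1) (a := n.choose q * (n + 1 + q + 2).choose (q + 1))
    (b := (n + 1).choose (q + 1) * (n + 1 + q + 2).choose q) (by
      push_cast at *
      linear_combination ((n + 1 + q + 2).choose (q + 1) : ℤ) * h2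
        + ((n + 1).choose (q + 1) : ℤ) * h1)
  refine this.trans (dvd_of_eq ?_)
  push_cast at *
  linear_combination -((n : ℤ) + 2) * ((n + 1).choose (q + 1) : ℤ) * h1

theorem dvd_alt_sum_of_mem_wAlg {n : ℕ} (hn : 1 ≤ n) {f : ℕ → ℤ} (hf : f ∈ wAlg) :
    ((n * (n + 1) * (n + 2) / Nat.gcd 2 n : ℕ) : ℤ) ∣
      ∑ k ∈ Finset.range n, (-1 : ℤ) ^ (k + 1) * (2 * k + 3) *
        (((k : ℤ) + 1) * (k + 2) * f k) := by
  rw [mem_wAlg, wSpan] at hf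
  induction hf using Submodule.span_induction with
  | mem f hf =>
    obtain ⟨q, rfl⟩ := hf
    exact dvd_alt_sum_w hn q
  | zero => simp
  | add f g _ _ hf hg =>
    simpa [mul_add, Finset.sum_add_distrib] using dvd_add hf hg
  | smul c f _ hf =>
    refine (hf.mul_left c).trans (dvd_of_eq ?_)
    rw [Finset.mul_sum]
    refine Finset.sum_congr rfl fun k _ => ?_
    simp only [Pi.smul_apply, smul_eq_mul]
    ring

theorem wPoly_succ_eq_sum_range {α k n : ℕ} (hα : 1 ≤ α) (hk : k < n) :
    wPoly α (k + 1) =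
      ∑ j ∈ Finset.range n, Polynomial.C (w (k + 1) (j + 1) ^ α) * X ^ j := by
  have hsub : Finset.range (k + 1) ⊆ Finset.range n := Finset.range_subset_range.mpr hk
  rw [wPoly, ← Finset.Ico_add_one_right_eq_Icc, Finset.sum_Ico_eq_sum_range, Nat.add_sub_cancel,
    ← Finset.sum_subset hsub]
  · refine Finset.sum_congr rfl fun j _ => ?_
    rw [add_comm 1 j, Nat.add_sub_cancel]
  · intro j _ hj
    rw [Finset.mem_range, not_lt] at hj
    rw [w_eq_zero_of_lt (Nat.succ_pos k) (by omega), zero_pow (by omega), map_zero, zero_mul]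

theorem exists_mem_wAlg_coeff_wPoly_pow {α : ℕ} (hα : 1 ≤ α) (m n i : ℕ) :
    ∃ f ∈ wAlg, ∀ k < n, ((wPoly α (k + 1)) ^ m).coeff i = f k := by
  let P : Polynomial wAlg := ∑ j ∈ Finset.range n,
    Polynomial.C ((⟨fun k => w (k + 1) (j + 1), w_mem_wSpan j⟩ : wAlg) ^ α) * X ^ j
  refine ⟨((P ^ m).coeff i : ℕ → ℤ), ((P ^ m).coeff i).2, fun k hk => ?_⟩
  let ev : wAlg →+* ℤ := (Pi.evalRingHom (fun _ : ℕ => ℤ) k).comp wAlg.val.toRingHom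
  have hP : P.map ev = wPoly α (k + 1) := by
    rw [wPoly_succ_eq_sum_range hα hk]
    simp [P, ev, Polynomial.map_sum]
  rw [← hP, ← Polynomial.map_pow, Polynomial.coeff_map]
  rfl

/-- For all positive integers `α, m, n, r`, every coefficient of
`∑_{k=1}^{n} (-1)^k k^r (k+1)^r (2k+1) w_k^{(α)}(x)^m` is divisible by
`n(n+1)(n+2)/gcd(2,n)`. -/
theorem coeff_dvd_alt_sum (α m n r : ℕ) (hα : 1 ≤ α) (hm : 1 ≤ m) (hn : 1 ≤ n) (hr : 1 ≤ r) :
    ∀ i : ℕ, ((n * (n + 1) * (n + 2) / Nat.gcd 2 n : ℕ) : ℤ) ∣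
      (∑ k ∈ Finset.Icc 1 n,
          ((-1 : ℤ) ^ k * (k : ℤ) ^ r * ((k : ℤ) + 1) ^ r * (2 * (k : ℤ) + 1)) • (wPoly α k) ^ m).coeff i := by
  intro i
  obtain ⟨f, hf, hfk⟩ := exists_mem_wAlg_coeff_wPoly_pow hα m n i
  obtain ⟨r, rfl⟩ := Nat.exists_eq_add_of_le' hr
  convert dvd_alt_sum_of_mem_wAlg hn (mul_mem (pow_mem mul_succ_mem_wAlg r) hf) using 1
  rw [← Finset.Ico_add_one_right_eq_Icc, Finset.sum_Ico_eq_sum_range, Polynomial.finsetSum_coeff,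
    Nat.add_sub_cancel]
  refine Finset.sum_congr rfl fun k hk => ?_
  rw [add_comm 1 k, Polynomial.coeff_smul, hfk k (Finset.mem_range.mp hk)]
  simp only [Pi.mul_apply, Pi.pow_apply, smul_eq_mul, mul_pow]
  push_cast
  ring
end

section
/- For all positive integers α, β, m, n, r, the least common multiple lcm(n, n+1, ..., n+2β+1) divides each coefficient of the polynomial 2·∑_{k=1}^{n} ((k)_β)^r·((k+β+1)_β)^r·(k+β)·∏_{i=0}^{2β-1} w_{k+i}^{(α)}(x)^m in ℤ[x]. -/
open Polynomial

section QAnalogues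

variable {A : Type*} [CommRing A]

/-- The `q`-integer `1 + q + ⋯ + q^(n-1)`. -/
def qInt (q : A) (n : ℕ) : A := ∑ i ∈ Finset.range n, q ^ i

/-- The Gaussian binomial coefficient, defined by the `q`-Pascal recursion. -/
def qBinom (q : A) : ℕ → ℕ → A
  | _, 0 => 1
  | 0, _ + 1 => 0
  | n + 1, k + 1 => qBinom q n k + q ^ (k + 1) * qBinom q n (k + 1)

@[simp] lemma qInt_zero (q : A) : qInt q 0 = 0 := by simp [qInt]

@[simp] lemma qInt_one (q : A) : qInt q 1 = 1 := by simp [qInt]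

lemma qInt_add (q : A) (m n : ℕ) : qInt q (m + n) = qInt q m + q ^ m * qInt q n := by
  simp [qInt, Finset.sum_range_add, pow_add, Finset.mul_sum]

lemma qInt_succ (q : A) (n : ℕ) : qInt q (n + 1) = 1 + q * qInt q n := by
  rw [add_comm, qInt_add]; simp

lemma qInt_of_one (n : ℕ) : qInt (1 : A) n = n := by simp [qInt]

@[simp] lemma qBinom_zero_right (q : A) (n : ℕ) : qBinom q n 0 = 1 := by cases n <;> rfl

lemma qBinom_zero_succ (q : A) (k : ℕ) : qBinom q 0 (k + 1) = 0 := rfl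

lemma qBinom_succ_succ (q : A) (n k : ℕ) :
    qBinom q (n + 1) (k + 1) = qBinom q n k + q ^ (k + 1) * qBinom q n (k + 1) := rfl

lemma qBinom_of_lt (q : A) {n k : ℕ} (h : n < k) : qBinom q n k = 0 := by
  induction n generalizing k with
  | zero => obtain ⟨k, rfl⟩ := Nat.exists_eq_succ_of_ne_zero h.ne'; rfl
  | succ n ih =>
    obtain ⟨k, rfl⟩ := Nat.exists_eq_succ_of_ne_zero (Nat.ne_zero_of_lt h)
    rw [Nat.succ_eq_add_one, qBinom_succ_succ, ih (by omega), ih (by omega)]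
    simp

lemma qBinom_self (q : A) (n : ℕ) : qBinom q n n = 1 := by
  induction n with
  | zero => simp
  | succ n ih => rw [qBinom_succ_succ, ih, qBinom_of_lt q n.lt_succ_self]; simp

lemma qBinom_of_one (n k : ℕ) : qBinom (1 : A) n k = n.choose k := by
  induction n generalizing k with
  | zero => cases k <;> simp [qBinom_zero_succ]
  | succ n ih => cases k <;> simp [qBinom_succ_succ, ih, Nat.choose_succ_succ]

lemma qInt_mul_qBinom_add (q : A) (n k : ℕ) :
    (qInt q (k + 1) + q ^ (k + 1) * qInt q (n - k)) * qBinom q n k =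
      qInt q (n + 1) * qBinom q n k := by
  rcases le_or_gt k n with h | h
  · rw [← qInt_add, show k + 1 + (n - k) = n + 1 by omega]
  · simp [qBinom_of_lt q h]

lemma qInt_mul_qBinom_succ_right (q : A) (n k : ℕ) :
    qInt q (k + 1) * qBinom q n (k + 1) = qInt q (n - k) * qBinom q n k := by
  induction n generalizing k with
  | zero => simp [qBinom_zero_succ]
  | succ n ih =>
    have h := qInt_mul_qBinom_add q n k
    cases k with
    | zero =>
      have h0 := ih 0
      simp only [qBinom_succ_succ, qBinom_zero_right, Nat.sub_zero] at *
      linear_combination q ^ (0 + 1) * h0 + h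
    | succ k =>
      have h1 := ih (k + 1)
      have h2 := ih k
      rcases le_or_gt (k + 1) n with hk | hk
      · have h3 : qInt q (k + 1 + 1) + q ^ (k + 1 + 1) * qInt q (n - (k + 1)) =
            qInt q (k + 1) + q ^ (k + 1) * qInt q (n - k) := by
          rw [← qInt_add, ← qInt_add]; congr 1; omega
        rw [qBinom_succ_succ, qBinom_succ_succ, Nat.add_sub_add_right]
        linear_combination q ^ (k + 1 + 1) * h1 + h2 + h3 * qBinom q n (k + 1)
      · rw [qBinom_of_lt q (by omega), Nat.sub_eq_zero_of_le hk]
        simp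

lemma qInt_mul_qBinom_succ_succ (q : A) (n k : ℕ) :
    qInt q (k + 1) * qBinom q (n + 1) (k + 1) = qInt q (n + 1) * qBinom q n k := by
  rw [qBinom_succ_succ]
  linear_combination q ^ (k + 1) * qInt_mul_qBinom_succ_right q n k + qInt_mul_qBinom_add q n k

/-- A `q`-analogue of `w`. -/
def qw (q : A) (k j : ℕ) : A :=
  qBinom q (k - 1) (j - 1) * qBinom q (k + j) j - q * (qBinom q k j * qBinom q (k + j) (j - 1))

lemma qw_of_lt (q : A) {k j : ℕ} (hk : 1 ≤ k) (h : k < j) : qw q k j = 0 := by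
  simp [qw, qBinom_of_lt q h, qBinom_of_lt q (show k - 1 < j - 1 by omega)]

lemma qw_of_one (k j : ℕ) : qw (1 : ℤ) k j = w k j := by
  simp [qw, w, qBinom_of_one]

lemma qInt_mul_qInt_mul_qw (q : A) {k j : ℕ} (hk : 1 ≤ k) (hj : 1 ≤ j) :
    qInt q k * qInt q (k + 1) * qw q k j = qInt q j * (qBinom q k j * qBinom q (k + j) j) := by
  obtain ⟨k, rfl⟩ := Nat.exists_eq_add_of_le' hk
  obtain ⟨j, rfl⟩ := Nat.exists_eq_add_of_le' hj
  have h1 := qInt_mul_qBinom_succ_succ q k j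
  have h2 := qInt_mul_qBinom_succ_right q (k + 1 + (j + 1)) j
  have h3 := qInt_succ q (k + 1)
  rw [show k + 1 + (j + 1) - j = k + 1 + 1 by omega] at h2
  simp only [qw, Nat.add_sub_cancel]
  linear_combination -qInt q (k + 1 + 1) * qBinom q (k + 1 + (j + 1)) (j + 1) * h1
    + q * qInt q (k + 1) * qBinom q (k + 1) (j + 1) * h2
    + qInt q (j + 1) * qBinom q (k + 1) (j + 1) * qBinom q (k + 1 + (j + 1)) (j + 1) * h3

/-- A `q`-analogue of `wPoly`; the weight `p` stands for `q⁻¹`. -/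
noncomputable def qwPoly (q p : A) (α k : ℕ) : A[X] :=
  ∑ j ∈ Finset.Icc 1 k, C ((p ^ (k * (j - 1)) * qw q k j) ^ α) * X ^ (j - 1)

lemma qwPoly_of_one (α k : ℕ) : qwPoly (1 : ℤ) 1 α k = wPoly α k := by
  simp [qwPoly, wPoly, qw_of_one]

/-- A `q`-analogue of twice the summand in `lcm_dvd_coeff_sum`; the weight `p` stands for `q⁻¹`. -/
noncomputable def qTerm (q p : A) (α β m r k : ℕ) : A[X] :=
  C (p ^ (k + β) * qInt q (2 * (k + β)) *
      (∏ c ∈ Finset.range β, p ^ (k + β) * qInt q (k + c) * qInt q (k + 2 * β - c)) ^ r) *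
    ∏ j ∈ Finset.range (2 * β), qwPoly q p α (k + j) ^ m

lemma qTerm_of_one (α β m r k : ℕ) :
    qTerm (1 : ℤ) 1 α β m r k =
      2 * (((k.ascFactorial β : ℤ)) ^ r * (((k + β + 1).ascFactorial β : ℤ)) ^ r * ((k : ℤ) + β)) •
        ∏ j ∈ Finset.range (2 * β), (wPoly α (k + j)) ^ m := by
  have h : ∏ c ∈ Finset.range β, ((k + 2 * β - c : ℕ) : ℤ) = (k + β + 1).ascFactorial β := by
    rw [Nat.ascFactorial_eq_prod_range, Nat.cast_prod, ← Finset.prod_range_reflect]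
    refine Finset.prod_congr rfl fun c hc => ?_
    rw [Finset.mem_range] at hc
    congr 1
    omega
  simp only [qTerm, qwPoly_of_one, qInt_of_one, one_pow, one_mul, Finset.prod_mul_distrib, h]
  rw [← Nat.cast_prod, ← Nat.ascFactorial_eq_prod_range, smul_eq_C_mul, ← mul_assoc]
  congr 1
  rw [show (2 : ℤ[X]) = C 2 from rfl, ← C_mul]
  congr 1
  push_cast
  ring

section Map

variable {B : Type*} [CommRing B] (f : A →+* B)

lemma map_qInt (q : A) (n : ℕ) : f (qInt q n) = qInt (f q) n := by simp [qInt]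

lemma map_qBinom (q : A) (n k : ℕ) : f (qBinom q n k) = qBinom (f q) n k := by
  induction n generalizing k with
  | zero => cases k <;> simp [qBinom_zero_succ]
  | succ n ih => cases k <;> simp [qBinom_succ_succ, ih]

lemma map_qTerm (q p : A) (α β m r k : ℕ) :
    (qTerm q p α β m r k).map f = qTerm (f q) (f p) α β m r k := by
  simp only [qTerm, qwPoly, Polynomial.map_mul, Polynomial.map_prod, Polynomial.map_sum,
    Polynomial.map_pow, Polynomial.map_C, Polynomial.map_X]
  simp only [qw, map_mul, map_pow, map_prod, map_sub, map_qInt, map_qBinom]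

end Map

end QAnalogues

section RootsOfUnity

variable {K : Type*} [Field K] {ζ θ : K} {d : ℕ}

lemma qInt_eq_zero_iff (hζ : IsPrimitiveRoot ζ d) (hd : 1 < d) {n : ℕ} :
    qInt ζ n = 0 ↔ d ∣ n := by
  have h : qInt ζ n * (ζ - 1) = ζ ^ n - 1 := geom_sum_mul ζ n
  rw [← hζ.pow_eq_one_iff_dvd, ← sub_eq_zero (a := ζ ^ n), ← h, mul_eq_zero,
    or_iff_left (sub_ne_zero.2 (hζ.ne_one hd))]

lemma qInt_eq_neg (hζ : IsPrimitiveRoot ζ d) (hd : 1 < d) {m n : ℕ} (h : d ∣ m + n) :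
    qInt ζ m = -(ζ ^ m * qInt ζ n) := by
  rw [← qInt_eq_zero_iff hζ hd, qInt_add] at h
  linear_combination h

lemma pow_eq_one_of_dvd (hζ : IsPrimitiveRoot ζ d) (hθ : θ * ζ = 1) {L : ℕ} (hL : d ∣ L) :
    θ ^ L = 1 := by
  simpa [mul_pow, (hζ.pow_eq_one_iff_dvd L).2 hL] using congrArg (· ^ L) hθ

lemma pow_mul_pow_of_add_eq (hζ : IsPrimitiveRoot ζ d) (hθ : θ * ζ = 1) {L e e' s : ℕ}
    (hL : d ∣ L) (he : e' + L = e + s) : θ ^ e' * ζ ^ s = θ ^ e := by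
  have h1 : θ ^ e' * θ ^ L = θ ^ e * θ ^ s := by rw [← pow_add, ← pow_add, he]
  have h2 : θ ^ s * ζ ^ s = 1 := by rw [← mul_pow, hθ, one_pow]
  rw [pow_eq_one_of_dvd hζ hθ hL] at h1
  linear_combination ζ ^ s * h1 + θ ^ e * h2

lemma pow_mul_qInt_mul_qInt_reflect (hζ : IsPrimitiveRoot ζ d) (hd : 1 < d) (hθ : θ * ζ = 1)
    {L e e' x y x' y' : ℕ} (hL : d ∣ L) (hx : x + y' = L) (hy : y + x' = L)
    (he : e' + L = e + (x' + y')) :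
    θ ^ e' * (qInt ζ x' * qInt ζ y') = θ ^ e * (qInt ζ x * qInt ζ y) := by
  rw [qInt_eq_neg hζ hd (m := x') (n := y) (by rwa [add_comm, hy]),
    qInt_eq_neg hζ hd (m := y') (n := x) (by rwa [add_comm, hx]), ← pow_mul_pow_of_add_eq hζ hθ hL he]
  ring

lemma qBinom_eq_zero_of_lt (hζ : IsPrimitiveRoot ζ d) (hd : 1 < d) {k : ℕ} (hk : 0 < k)
    (hkd : k < d) : qBinom ζ d k = 0 := by
  obtain ⟨k, rfl⟩ := Nat.exists_eq_add_of_le' hk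
  obtain ⟨n, rfl⟩ := Nat.exists_eq_add_of_le' hd.le
  have h := qInt_mul_qBinom_succ_succ ζ n k
  rw [(qInt_eq_zero_iff hζ hd).2 dvd_rfl, zero_mul] at h
  exact (mul_eq_zero.1 h).resolve_left fun h0 =>
    Nat.not_dvd_of_pos_of_lt hk hkd ((qInt_eq_zero_iff hζ hd).1 h0)

lemma qBinom_add_of_lt (hζ : IsPrimitiveRoot ζ d) (hd : 1 < d) (n : ℕ) {k : ℕ} (hk : k < d) :
    qBinom ζ (n + d) k = qBinom ζ n k := by
  induction n generalizing k with
  | zero =>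
    cases k with
    | zero => simp
    | succ k => rw [zero_add, qBinom_eq_zero_of_lt hζ hd k.succ_pos hk, qBinom_zero_succ]
  | succ n ih =>
    cases k with
    | zero => simp
    | succ k =>
      rw [Nat.add_right_comm, qBinom_succ_succ, qBinom_succ_succ, ih hk, ih (by omega)]

lemma qBinom_add_add (hζ : IsPrimitiveRoot ζ d) (hd : 1 < d) (n k : ℕ) :
    qBinom ζ (n + d) (k + d) = qBinom ζ n (k + d) + qBinom ζ n k := by
  obtain ⟨e, rfl⟩ := Nat.exists_eq_add_of_le' hd.le
  induction n generalizing k with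
  | zero =>
    cases k with
    | zero => simp [qBinom_self, qBinom_zero_succ]
    | succ k =>
      rw [qBinom_of_lt ζ (by omega), qBinom_of_lt ζ (by omega), qBinom_of_lt ζ (by omega),
        add_zero]
  | succ n ih =>
    have hpow (k : ℕ) : ζ ^ (k + e + 1) = ζ ^ k := by
      rw [add_assoc, pow_add, hζ.pow_eq_one, mul_one]
    rw [Nat.add_right_comm, ← add_assoc k e 1, qBinom_succ_succ, qBinom_succ_succ, hpow,
      add_assoc k e 1, ih k]
    cases k with
    | zero =>
      rw [zero_add, qBinom_add_of_lt hζ hd n (by omega)]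
      simp
      ring
    | succ k =>
      rw [show k + 1 + e = k + (e + 1) by omega, ih k, qBinom_succ_succ]
      ring

/-- The `q`-Lucas theorem. -/
lemma qBinom_mul_add (hζ : IsPrimitiveRoot ζ d) (hd : 1 < d) (c i : ℕ) {a j : ℕ} (ha : a < d)
    (hj : j < d) : qBinom ζ (c * d + a) (i * d + j) = c.choose i * qBinom ζ a j := by
  induction c generalizing i with
  | zero =>
    cases i with
    | zero => simp
    | succ i =>
      rw [qBinom_of_lt ζ (by rw [add_one_mul]; omega)]
      simp
  | succ c ih =>
    rw [add_one_mul, Nat.add_right_comm]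
    cases i with
    | zero =>
      have h := ih 0
      rw [zero_mul, zero_add] at h ⊢
      rw [qBinom_add_of_lt hζ hd _ hj, h]
      simp
    | succ i =>
      have h := ih (i + 1)
      rw [add_one_mul, Nat.add_right_comm (i * d)] at h ⊢
      rw [qBinom_add_add hζ hd, h, ih i, Nat.choose_succ_succ]
      push_cast
      ring

lemma qBinom_mul_qBinom_mul_add (hζ : IsPrimitiveRoot ζ d) (hd : 1 < d) (c i : ℕ) {a j : ℕ}
    (ha : a < d) (hj : j < d) :
    qBinom ζ (c * d + a) (i * d + j) * qBinom ζ (c * d + a + (i * d + j)) (i * d + j) =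
      c.choose i * (c + i).choose i * (qBinom ζ a j * qBinom ζ (a + j) j) := by
  rw [qBinom_mul_add hζ hd c i ha hj]
  rcases lt_or_ge (a + j) d with h | h
  · rw [show c * d + a + (i * d + j) = (c + i) * d + (a + j) by ring,
      qBinom_mul_add hζ hd _ i h hj]
    ring
  · obtain ⟨b, hb⟩ := Nat.exists_eq_add_of_le' h
    rw [show c * d + a + (i * d + j) = (c + i + 1) * d + b by linear_combination hb,
      qBinom_mul_add hζ hd _ i (by omega) hj, hb, qBinom_add_of_lt hζ hd b hj,
      qBinom_of_lt ζ (show b < j by omega)]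
    simp

lemma pow_mul_qBinom_mul_qBinom_reflect (hζ : IsPrimitiveRoot ζ d) (hd : 1 < d)
    (hθ : θ * ζ = 1) {a a' j : ℕ} (h : a + a' + 1 = d) (hj : j < d) :
    θ ^ (a' * j) * (qBinom ζ a' j * qBinom ζ (a' + j) j) =
      θ ^ (a * j) * (qBinom ζ a j * qBinom ζ (a + j) j) := by
  induction j with
  | zero => simp
  | succ j ih =>
    have hrec (b : ℕ) : qInt ζ (j + 1) ^ 2 *
        (θ ^ (b * (j + 1)) * (qBinom ζ b (j + 1) * qBinom ζ (b + (j + 1)) (j + 1))) =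
          θ ^ b * (qInt ζ (b - j) * qInt ζ (b + j + 1)) *
            (θ ^ (b * j) * (qBinom ζ b j * qBinom ζ (b + j) j)) := by
      have h1 := qInt_mul_qBinom_succ_right ζ b j
      have h2 := qInt_mul_qBinom_succ_succ ζ (b + j) j
      rw [← add_assoc, mul_add_one, pow_add]
      linear_combination θ ^ (b * j) * θ ^ b * (qInt ζ (j + 1) * qBinom ζ (b + j + 1) (j + 1) * h1
        + qInt ζ (b - j) * qBinom ζ b j * h2)
    have ih := ih (by omega)
    have hne : qInt ζ (j + 1) ^ 2 ≠ 0 := pow_ne_zero _ fun h0 =>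
      Nat.not_dvd_of_pos_of_lt j.succ_pos hj ((qInt_eq_zero_iff hζ hd).1 h0)
    refine mul_left_cancel₀ hne ?_
    rw [hrec, hrec]
    by_cases hja : j ≤ a ∧ j ≤ a'
    · rw [ih, pow_mul_qInt_mul_qInt_reflect hζ hd hθ (L := d) (e := a) (x := a - j)
        (y := a + j + 1) dvd_rfl (by omega) (by omega) (by omega)]
    · have h0 : θ ^ (a * j) * (qBinom ζ a j * qBinom ζ (a + j) j) = 0 := by
        rcases lt_or_ge a j with h1 | h1
        · simp [qBinom_of_lt ζ h1]
        · rw [← ih, qBinom_of_lt ζ (show a' < j by omega)]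
          simp
      rw [ih, h0, mul_zero, mul_zero]

lemma pow_mul_qw_reflect (hζ : IsPrimitiveRoot ζ d) (hd : 1 < d) (hθ : θ * ζ = 1) (c : ℕ)
    {a a' j : ℕ} (h : a + a' + 1 = d) (ha : 1 ≤ a) (ha' : 1 ≤ a') (hj : 1 ≤ j) :
    θ ^ ((c * d + a') * (j - 1)) * qw ζ (c * d + a') j =
      θ ^ ((c * d + a) * (j - 1)) * qw ζ (c * d + a) j := by
  have hθd : θ ^ d = 1 := pow_eq_one_of_dvd hζ hθ dvd_rfl
  have hjd : j % d < d := Nat.mod_lt _ (by omega)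
  have hG (b : ℕ) (hb : b < d) : θ ^ ((c * d + b) * j) *
      (qBinom ζ (c * d + b) j * qBinom ζ (c * d + b + j) j) =
        c.choose (j / d) * (c + j / d).choose (j / d) *
          (θ ^ (b * (j % d)) * (qBinom ζ b (j % d) * qBinom ζ (b + j % d) (j % d))) := by
    have h1 := qBinom_mul_qBinom_mul_add hζ hd c (j / d) hb hjd
    rw [Nat.div_add_mod'] at h1
    have h2 : θ ^ ((c * d + b) * j) = θ ^ (b * (j % d)) := by
      rw [show (c * d + b) * j = d * (c * j + b * (j / d)) + b * (j % d) by
        linear_combination b * (Nat.div_add_mod' j d).symm, pow_add, pow_mul, hθd, one_pow, one_mul]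
    rw [h1, h2]
    ring
  have hw (b : ℕ) (hb : 1 ≤ b) (hbd : b < d) :
      θ ^ (c * d + b) * (qInt ζ (c * d + b) * qInt ζ (c * d + b + 1)) *
        (θ ^ ((c * d + b) * (j - 1)) * qw ζ (c * d + b) j) =
          qInt ζ j * (θ ^ ((c * d + b) * j) *
            (qBinom ζ (c * d + b) j * qBinom ζ (c * d + b + j) j)) := by
    have h1 := qInt_mul_qInt_mul_qw ζ (k := c * d + b) (by omega) hj
    obtain ⟨j, rfl⟩ := Nat.exists_eq_add_of_le' hj
    rw [Nat.add_sub_cancel, mul_add_one, pow_add]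
    linear_combination θ ^ ((c * d + b) * j) * θ ^ (c * d + b) * h1
  have hne (b : ℕ) (hb : 1 ≤ b) (hbd : b + 1 < d) :
      θ ^ (c * d + b) * (qInt ζ (c * d + b) * qInt ζ (c * d + b + 1)) ≠ 0 := by
    have hθ0 : θ ≠ 0 := left_ne_zero_of_mul_eq_one hθ
    refine mul_ne_zero (pow_ne_zero _ hθ0) (mul_ne_zero ?_ ?_)
    · rw [Ne, qInt_eq_zero_iff hζ hd, Nat.dvd_add_right (Dvd.intro_left c rfl)]
      exact Nat.not_dvd_of_pos_of_lt hb (by omega)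
    · rw [Ne, qInt_eq_zero_iff hζ hd, add_assoc, Nat.dvd_add_right (Dvd.intro_left c rfl)]
      exact Nat.not_dvd_of_pos_of_lt b.succ_pos hbd
  have hrefl := pow_mul_qInt_mul_qInt_reflect hζ hd hθ (L := (2 * c + 1) * d)
    (e := c * d + a) (e' := c * d + a') (x := c * d + a) (y := c * d + a + 1)
    (x' := c * d + a') (y' := c * d + a' + 1) (Dvd.intro_left _ rfl)
    (by linear_combination h) (by linear_combination h) (by linear_combination h.symm)
  refine mul_left_cancel₀ (hne a ha (by omega)) ?_
  rw [hw a ha (by omega), ← hrefl, hw a' ha' (by omega), hG a (by omega), hG a' (by omega),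
    pow_mul_qBinom_mul_qBinom_reflect hζ hd hθ h hjd]

lemma qwPoly_eq_sum {A : Type*} [CommRing A] (q p : A) {α k M : ℕ} (hα : 1 ≤ α) (hk : 1 ≤ k)
    (hM : k ≤ M) : qwPoly q p α k =
      ∑ j ∈ Finset.Icc 1 M, C ((p ^ (k * (j - 1)) * qw q k j) ^ α) * X ^ (j - 1) := by
  refine Finset.sum_subset (Finset.Icc_subset_Icc_right hM) fun j hj hj' => ?_
  rw [Finset.mem_Icc] at hj hj'
  rw [qw_of_lt q hk (by omega), mul_zero, zero_pow (by omega), C_0, zero_mul]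

lemma qwPoly_reflect (hζ : IsPrimitiveRoot ζ d) (hd : 1 < d) (hθ : θ * ζ = 1) {α : ℕ}
    (hα : 1 ≤ α) (c : ℕ) {a a' : ℕ} (h : a + a' + 1 = d) (ha : 1 ≤ a) (ha' : 1 ≤ a') :
    qwPoly ζ θ α (c * d + a') = qwPoly ζ θ α (c * d + a) := by
  rw [qwPoly_eq_sum ζ θ hα (M := c * d + d) (by omega) (by omega),
    qwPoly_eq_sum ζ θ hα (M := c * d + d) (by omega) (by omega)]
  refine Finset.sum_congr rfl fun j hj => ?_
  rw [pow_mul_qw_reflect hζ hd hθ c h ha ha' (Finset.mem_Icc.1 hj).1]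

lemma qTerm_eq_zero (hζ : IsPrimitiveRoot ζ d) (hd : 1 < d) {α β m r k i : ℕ} (hr : 1 ≤ r)
    (hi : i ≤ 2 * β) (h : d ∣ k + i) : qTerm ζ θ α β m r k = 0 := by
  rw [qTerm, mul_eq_zero, C_eq_zero]
  left
  rcases eq_or_ne i β with rfl | hne
  · rw [(qInt_eq_zero_iff hζ hd).2 (h.mul_left 2)]
    simp
  · rw [mul_eq_zero, pow_eq_zero_iff (by omega), Finset.prod_eq_zero_iff]
    right
    have h0 : qInt ζ (k + i) = 0 := (qInt_eq_zero_iff hζ hd).2 h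
    rcases lt_or_gt_of_ne hne with hlt | hlt
    · exact ⟨i, Finset.mem_range.2 hlt, by simp [h0]⟩
    · refine ⟨2 * β - i, Finset.mem_range.2 (by omega), ?_⟩
      rw [show k + 2 * β - (2 * β - i) = k + i by omega, h0, mul_zero]

lemma qTerm_reflect (hζ : IsPrimitiveRoot ζ d) (hd : 1 < d) (hθ : θ * ζ = 1)
    {α β m r : ℕ} (hα : 1 ≤ α) (c : ℕ) {a a' : ℕ} (h : a + a' + 2 * β = d) (ha : 1 ≤ a)
    (ha' : 1 ≤ a') : qTerm ζ θ α β m r (c * d + a') = -qTerm ζ θ α β m r (c * d + a) := by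
  have hL : d ∣ (2 * c + 1) * d := Dvd.intro_left _ rfl
  have hLe : (2 * c + 1) * d = c * d + (c * d + d) := by ring
  have h1 : θ ^ (c * d + a' + β) * qInt ζ (2 * (c * d + a' + β)) =
      -(θ ^ (c * d + a + β) * qInt ζ (2 * (c * d + a + β))) := by
    rw [qInt_eq_neg hζ hd (n := 2 * (c * d + a + β))
      ((hL.mul_left 2).trans (dvd_of_eq (by omega)))]
    have h2 : θ ^ (c * d + a' + β) * ζ ^ (2 * (c * d + a' + β)) = θ ^ (c * d + a + β) :=
      pow_mul_pow_of_add_eq hζ hθ hL (by omega)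
    linear_combination -qInt ζ (2 * (c * d + a + β)) * h2
  have h2 : ∏ i ∈ Finset.range β, θ ^ (c * d + a' + β) * qInt ζ (c * d + a' + i) *
        qInt ζ (c * d + a' + 2 * β - i) =
      ∏ i ∈ Finset.range β, θ ^ (c * d + a + β) * qInt ζ (c * d + a + i) *
        qInt ζ (c * d + a + 2 * β - i) := by
    refine Finset.prod_congr rfl fun i hi => ?_
    rw [Finset.mem_range] at hi
    rw [mul_assoc, mul_assoc]
    exact pow_mul_qInt_mul_qInt_reflect hζ hd hθ hL (by omega) (by omega) (by omega)
  have h3 : ∏ j ∈ Finset.range (2 * β), qwPoly ζ θ α (c * d + a' + j) ^ m =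
      ∏ j ∈ Finset.range (2 * β), qwPoly ζ θ α (c * d + a + j) ^ m := by
    rw [← Finset.prod_range_reflect]
    refine Finset.prod_congr rfl fun j hj => ?_
    rw [Finset.mem_range] at hj
    rw [add_assoc, add_assoc,
      qwPoly_reflect hζ hd hθ hα c (a := a + j) (by omega) (by omega) (by omega)]
  rw [qTerm, qTerm, h1, h2, h3, neg_mul, C_neg, neg_mul]

lemma sum_qTerm_eq_zero [CharZero K] (hζ : IsPrimitiveRoot ζ d) (hd : 1 < d) (hθ : θ * ζ = 1)
    {α β m r n t : ℕ} (hα : 1 ≤ α) (hr : 1 ≤ r) (ht : t ≤ 2 * β + 1) (hdn : d ∣ n + t) :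
    ∑ k ∈ Finset.Icc 1 n, qTerm ζ θ α β m r k = 0 := by
  rw [← Finset.sum_filter_of_ne (p := fun k => 1 ≤ k % d ∧ k % d + 2 * β < d)]
  · have hrefl (k : ℕ) (hk : k ∈ (Finset.Icc 1 n).filter
        fun k => 1 ≤ k % d ∧ k % d + 2 * β < d) :
        qTerm ζ θ α β m r k + qTerm ζ θ α β m r (k / d * d + (d - 2 * β - k % d)) = 0 := by
      rw [Finset.mem_filter] at hk
      rw [qTerm_reflect hζ hd hθ hα (k / d) (a := k % d) (by omega) (by omega) (by omega),
        Nat.div_add_mod', add_neg_cancel]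
    refine Finset.sum_involution (fun k _ => k / d * d + (d - 2 * β - k % d)) hrefl ?_ ?_ ?_
    · intro k hk hne hfix
      have h := hrefl k hk
      rw [hfix, add_self_eq_zero] at h
      exact hne h
    · intro k hk
      rw [Finset.mem_filter, Finset.mem_Icc] at hk ⊢
      have hmod : (k / d * d + (d - 2 * β - k % d)) % d = d - 2 * β - k % d := by
        rw [Nat.mul_add_mod', Nat.mod_eq_of_lt (by omega)]
      have hle : (k / d + 1) * d ≤ n + t := by
        obtain ⟨e, he⟩ := hdn
        rw [he, mul_comm]
        refine Nat.mul_le_mul_left d (Nat.lt_of_mul_lt_mul_left (a := d) ?_)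
        rw [← he]
        have := Nat.div_add_mod k d
        omega
      rw [add_one_mul] at hle
      rw [hmod]
      omega
    · intro k hk
      rw [Finset.mem_filter] at hk
      have hlt : d - 2 * β - k % d < d := by omega
      rw [Nat.mul_add_mod', Nat.mod_eq_of_lt hlt, add_comm (k / d * d),
        Nat.add_mul_div_right _ _ (by omega), Nat.div_eq_of_lt hlt, zero_add]
      have := Nat.div_add_mod' k d
      omega
  · intro k _ hne
    by_contra hk
    refine hne ?_
    have hkd : k % d < d := Nat.mod_lt _ (by omega)
    have hdiv := Nat.div_add_mod' k d
    rcases Nat.eq_zero_or_pos (k % d) with h0 | h0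
    · exact qTerm_eq_zero hζ hd hr (i := 0) (Nat.zero_le _) (Nat.dvd_of_mod_eq_zero h0)
    · exact qTerm_eq_zero hζ hd hr (show d - k % d ≤ 2 * β by omega)
        ⟨k / d + 1, by rw [mul_add_one, mul_comm d]; omega⟩

end RootsOfUnity

lemma natCast_dvd_eval_one {f : ℤ[X]} {N : ℕ} (hN : 0 < N)
    (h : ∀ d, d ∣ N → 1 < d → ∀ ζ : ℂ, IsPrimitiveRoot ζ d → aeval ζ f = 0) :
    (N : ℤ) ∣ f.eval 1 := by
  have hdvd : ∀ d ∈ N.divisors.erase 1, cyclotomic d ℤ ∣ f := by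
    intro d hd
    rw [Finset.mem_erase, Nat.mem_divisors] at hd
    have hd0 : 0 < d := Nat.pos_of_dvd_of_pos hd.2.1 hN
    have hζ := Complex.isPrimitiveRoot_exp d hd0.ne'
    rw [cyclotomic_eq_minpoly hζ hd0]
    exact minpoly.isIntegrallyClosed_dvd (hζ.isIntegral hd0) (h d hd.2.1 (by omega) _ hζ)
  have hprod : ∏ d ∈ N.divisors.erase 1, cyclotomic d ℤ ∣ f := by
    rw [← map_dvd_map (Int.castRingHom ℚ) Int.cast_injective
      (monic_prod_of_monic _ _ fun d _ => cyclotomic.monic d ℤ), Polynomial.map_prod]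
    refine Finset.prod_dvd_of_coprime (fun d _ e _ hne => ?_) fun d hd =>
      map_dvd (mapRingHom (Int.castRingHom ℚ)) (hdvd d hd)
    simpa [Function.onFun] using cyclotomic.isCoprime_rat hne
  rw [prod_cyclotomic_eq_geom_sum hN] at hprod
  simpa [eval_finsetSum] using map_dvd (evalRingHom (1 : ℤ)) hprod

/-- For all positive integers `α, β, m, n, r`, `lcm(n,n+1,…,n+2β+1)` divides every coefficient of
`2·∑_{k=1}^{n} ((k)_β)^r ((k+β+1)_β)^r (k+β) ∏_{i=0}^{2β-1} w_{k+i}^{(α)}(x)^m`,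
where `(x)_β = x(x+1)⋯(x+β-1)` is the rising factorial. -/
theorem lcm_dvd_coeff_sum (α β m n r : ℕ)
    (hα : 1 ≤ α) (hβ : 1 ≤ β) (hm : 1 ≤ m) (hn : 1 ≤ n) (hr : 1 ≤ r) :
    ∀ i : ℕ, ((Finset.lcm (Finset.Icc n (n + 2 * β + 1)) id : ℕ) : ℤ) ∣
      (2 * ∑ k ∈ Finset.Icc 1 n,
          (((k.ascFactorial β : ℤ)) ^ r * (((k + β + 1).ascFactorial β : ℤ)) ^ r * ((k : ℤ) + β)) •
            ∏ j ∈ Finset.range (2 * β), (wPoly α (k + j)) ^ m).coeff i := by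
  intro i
  have hN (N : ℕ) (hN : N ∈ Finset.Icc n (n + 2 * β + 1)) : (N : ℤ) ∣
      (∑ k ∈ Finset.Icc 1 n, qTerm (1 : ℤ) 1 α β m r k).coeff i := by
    rw [Finset.mem_Icc] at hN
    obtain ⟨t, rfl⟩ := Nat.exists_eq_add_of_le hN.1
    have hmap {B : Type} [CommRing B] (φ : ℤ[X] →+* B) :
        φ ((∑ k ∈ Finset.Icc 1 n, qTerm (X : ℤ[X]) (X ^ (n + t - 1)) α β m r k).coeff i) =
          (∑ k ∈ Finset.Icc 1 n, qTerm (φ X) (φ X ^ (n + t - 1)) α β m r k).coeff i := by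
      simp only [← map_pow, ← map_qTerm, ← Polynomial.map_sum, coeff_map]
    have heval := hmap (evalRingHom (1 : ℤ))
    rw [coe_evalRingHom, eval_X, one_pow] at heval
    rw [← heval]
    refine natCast_dvd_eval_one (by omega) fun d hdvd hd ζ hζ => ?_
    have hθ : ζ ^ (n + t - 1) * ζ = 1 := by
      rw [← pow_succ, Nat.sub_add_cancel (by omega), hζ.pow_eq_one_iff_dvd]
      exact hdvd
    have haeval := hmap (aeval ζ : ℤ[X] →ₐ[ℤ] ℂ).toRingHom
    simp only [AlgHom.toRingHom_eq_coe, RingHom.coe_coe, aeval_X] at haeval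
    rw [haeval, sum_qTerm_eq_zero hζ hd hθ hα hr (by omega) hdvd, coeff_zero]
  simp only [qTerm_of_one] at hN
  rw [Finset.mul_sum, Int.natCast_dvd]
  refine Finset.lcm_dvd fun N hmem => ?_
  rw [id, ← Int.natCast_dvd]
  exact hN N hmem
end
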